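/- arXiv:2601.01013 — 7 statements merged into one kernel-verified Lean document; each statement's English description precedes it below -/
import Mathlib

section
/- The instantaneous price of a security is the partial derivative of the LMSR cost function with respect to that security's outstanding share quantity: for every q : Ω → ℝ and every ω ∈ Ω, the function t ↦ C(q updated so that its ω-coordinate is t) has derivative p_ω(q) at t = q_ω. -/
/-- The instantaneous price of a security is the partial derivative of the LMSR
cost function `C(q) = b·log(∑ ω, exp(q ω / b))` with respect to that security's
outstanding share quantity: the map `t ↦ C(Function.update q ω t)` has derivative
`p_ω(q) = exp(q ω / b) / ∑ ω', exp(q ω' / b)` at `t = q ω`. -/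
theorem lmsr_price_is_deriv_of_cost
    {Ω : Type*} [Fintype Ω] [Nonempty Ω] [DecidableEq Ω]
    (b : ℝ) (hb : 0 < b) (q : Ω → ℝ) (ω : Ω) :
    HasDerivAt
      (fun t : ℝ => b * Real.log (∑ ω' : Ω, Real.exp (Function.update q ω t ω' / b)))
      (Real.exp (q ω / b) / ∑ ω' : Ω, Real.exp (q ω' / b))
      (q ω) := by
  have hpos : 0 < ∑ ω' : Ω, Real.exp (q ω' / b) :=
    Finset.sum_pos (fun i _ => Real.exp_pos _) Finset.univ_nonempty
  have hsum : HasDerivAt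
      (fun t : ℝ => ∑ ω' : Ω, Real.exp (Function.update q ω t ω' / b))
      (∑ ω' : Ω, if ω' = ω then Real.exp (q ω / b) * (1 / b) else 0) (q ω) := by
    apply HasDerivAt.fun_sum
    intro i _
    by_cases h : i = ω
    · subst h
      simp only [Function.update_self, if_true]
      exact ((hasDerivAt_id (q i)).div_const b).exp
    · simp only [Function.update_of_ne h, if_neg h]
      exact hasDerivAt_const _ _
  rw [Finset.sum_ite_eq' Finset.univ ω, if_pos (Finset.mem_univ ω)] at hsum
  have hlog := (hsum.log (by rw [Function.update_eq_self]; exact hpos.ne')).const_mul b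
  rw [Function.update_eq_self] at hlog
  refine hlog.congr_deriv ?_
  have hb0 := hb.ne'
  field_simp
end

section
/- The new atomic proposition is statistically independent of every existing security: for every q : Ω → ℝ and every T ⊆ Ω, the extended-market price of the conjunction security ℓ(T) ∩ S = T × {true} equals the product of the extended-market price of ℓ(T) = T × Bool and the extended-market price of S = Ω × {true}, where all extended prices are computed from q̃(ω,t) = q(ω). -/
open Finset

/-- The new atomic proposition is statistically independent of every existing
security: in the extended market on `Ω × Bool` with `q̃(ω,t) = q ω`, the price of
the conjunction security `ℓ(T) ∩ S = T ×ˢ {true}` equals the product of the price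
of `ℓ(T) = T ×ˢ univ` and the price of `S = univ ×ˢ {true}`. -/
theorem new_atomic_independent_of_existing
    {Ω : Type*} [Fintype Ω] [Nonempty Ω] [DecidableEq Ω]
    (b : ℝ) (hb : 0 < b) (q : Ω → ℝ) (T : Finset Ω) :
    (∑ p ∈ T ×ˢ ({true} : Finset Bool), Real.exp (q p.1 / b)) /
      (∑ p : Ω × Bool, Real.exp (q p.1 / b))
    = ((∑ p ∈ T ×ˢ (univ : Finset Bool), Real.exp (q p.1 / b)) /
        (∑ p : Ω × Bool, Real.exp (q p.1 / b))) *
      ((∑ p ∈ ((univ : Finset Ω) ×ˢ ({true} : Finset Bool)), Real.exp (q p.1 / b)) /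
        (∑ p : Ω × Bool, Real.exp (q p.1 / b))) := by
  have hZ : 0 < ∑ ω : Ω, Real.exp (q ω / b) :=
    Finset.sum_pos (fun _ _ => Real.exp_pos _) Finset.univ_nonempty
  have h1 : ∀ U : Finset Ω, (∑ p ∈ U ×ˢ ({true} : Finset Bool), Real.exp (q p.1 / b))
      = ∑ ω ∈ U, Real.exp (q ω / b) := by
    intro U
    rw [Finset.sum_product]
    simp
  have h2 : ∀ U : Finset Ω, (∑ p ∈ U ×ˢ (univ : Finset Bool), Real.exp (q p.1 / b))
      = 2 * ∑ ω ∈ U, Real.exp (q ω / b) := by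
    intro U
    rw [Finset.sum_product, Finset.mul_sum]
    simp
  rw [← Finset.univ_product_univ, h1, h1, h2, h2]
  field_simp
end

section
/- Under negative initialization, the prices of all existing securities converge to their original values: fix q : Ω → ℝ and for K > 0 define q̃_K on Ω × Bool by q̃_K(ω,true) = q(ω) − K·b and q̃_K(ω,false) = q(ω). Then for every T ⊆ Ω, the extended-market price of the lifted security ℓ(T) = T × Bool computed from q̃_K tends, as K → ∞, to the original price Σ_{ω∈T} exp(q(ω)/b) / Σ_{ω'∈Ω} exp(q(ω')/b). -/
open Finset Filter

/-- Under negative initialization, the prices of all existing securities converge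
to their original values: with `q̃_K(ω,true) = q ω − K·b` and
`q̃_K(ω,false) = q ω` on `Ω × Bool`, for every `T ⊆ Ω` the extended-market LMSR
price of the lifted security `ℓ T = T ×ˢ univ` tends, as `K → ∞`, to the original
price `(∑ ω ∈ T, exp (q ω / b)) / (∑ ω', exp (q ω' / b))`. -/
theorem negative_initialization_prices_tendsto_original
    {Ω : Type*} [Fintype Ω] [Nonempty Ω]
    (b : ℝ) (hb : 0 < b) (q : Ω → ℝ) (T : Finset Ω) :
    Tendsto
      (fun K : ℝ =>
        (∑ p ∈ T ×ˢ (univ : Finset Bool),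
            Real.exp ((if p.2 = true then q p.1 - K * b else q p.1) / b)) /
          (∑ p : Ω × Bool,
            Real.exp ((if p.2 = true then q p.1 - K * b else q p.1) / b)))
      atTop
      (nhds ((∑ ω ∈ T, Real.exp (q ω / b)) / (∑ ω : Ω, Real.exp (q ω / b)))) := by
  -- every lifted sum is the original sum times `1 + exp (-K)`, so the price is constant in `K`
  have key : ∀ (K : ℝ) (S : Finset Ω),
      (∑ p ∈ S ×ˢ (univ : Finset Bool),
        Real.exp ((if p.2 = true then q p.1 - K * b else q p.1) / b)) =
      (Real.exp (-K) + 1) * ∑ ω ∈ S, Real.exp (q ω / b) := by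
    intro K S
    rw [Finset.sum_product, Finset.mul_sum]
    refine Finset.sum_congr rfl fun ω _ => ?_
    have h : (q ω - K * b) / b = -K + q ω / b := by
      field_simp
      ring
    simp only [Fintype.sum_bool, if_true, Bool.false_eq_true, if_false]
    rw [h, Real.exp_add]
    ring
  refine tendsto_const_nhds.congr fun K => ?_
  rw [← Finset.univ_product_univ, key, key]
  exact (mul_div_mul_left _ _ (by positivity)).symm
end

section
/- Under negative initialization, cost differences converge to their original values: for any two share vectors q¹, q² : Ω → ℝ and K > 0, define q̃ⁱ_K on Ω × Bool by q̃ⁱ_K(ω,true) = qⁱ(ω) − K·b and q̃ⁱ_K(ω,false) = qⁱ(ω). Then C̃(q̃¹_K) − C̃(q̃²_K) tends to C(q¹) − C(q²) as K → ∞, where C and C̃ are the LMSR cost functions on Ω and Ω × Bool respectively. -/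
open Filter

/-- Under negative initialization, cost differences converge to their original
values: with `q̃ⁱ_K(ω,true) = qⁱ ω − K·b` and `q̃ⁱ_K(ω,false) = qⁱ ω` on
`Ω × Bool`, `C̃(q̃¹_K) − C̃(q̃²_K)` tends to `C(q¹) − C(q²)` as `K → ∞`, where
`C` and `C̃` are the LMSR cost functions on `Ω` and `Ω × Bool`. -/
theorem negative_initialization_cost_differences_tendsto_original
    {Ω : Type*} [Fintype Ω] [Nonempty Ω]
    (b : ℝ) (hb : 0 < b) (q1 q2 : Ω → ℝ) :
    Tendsto
      (fun K : ℝ =>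
        b * Real.log (∑ p : Ω × Bool,
            Real.exp ((if p.2 = true then q1 p.1 - K * b else q1 p.1) / b))
        - b * Real.log (∑ p : Ω × Bool,
            Real.exp ((if p.2 = true then q2 p.1 - K * b else q2 p.1) / b)))
      atTop
      (nhds (b * Real.log (∑ ω : Ω, Real.exp (q1 ω / b))
        - b * Real.log (∑ ω : Ω, Real.exp (q2 ω / b)))) := by
  have key : ∀ (q : Ω → ℝ) (K : ℝ),
      Real.log (∑ p : Ω × Bool,
        Real.exp ((if p.2 = true then q p.1 - K * b else q p.1) / b))
      = Real.log (Real.exp (-K) + 1) + Real.log (∑ ω : Ω, Real.exp (q ω / b)) := by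
    intro q K
    have hS : 0 < ∑ ω : Ω, Real.exp (q ω / b) :=
      Finset.sum_pos (fun ω _ => Real.exp_pos _) Finset.univ_nonempty
    rw [← Real.log_mul (by positivity) hS.ne', Fintype.sum_prod_type, Finset.mul_sum]
    congr 1
    refine Finset.sum_congr rfl fun ω _ => ?_
    have h : (q ω - K * b) / b = -K + q ω / b := by
      field_simp
      ring
    simp [Fintype.sum_bool, h, Real.exp_add, add_mul]
  refine tendsto_const_nhds.congr fun K => ?_
  rw [key q1 K, key q2 K]
  ring
end

section
/- The LMSR cost function dominates every coordinate, bounding the market maker's loss: for every q : Ω → ℝ and every ω ∈ Ω, C(q) ≥ q_ω; consequently, for any initial share vector q⁰ and any final share vector q, the market maker's net loss upon resolution to outcome ω satisfies (q_ω − q⁰_ω) − (C(q) − C(q⁰)) ≤ C(q⁰) + Σ_{τ∈Ω} max(0, −q⁰_τ). -/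
/-- The LMSR cost function `C(q) = b·log(∑ ω, exp(q ω / b))` dominates every
coordinate, bounding the market maker's loss: `C(q) ≥ q ω` for all `q` and `ω`;
consequently, for any initial share vector `q⁰` and final share vector `q`, the
market maker's net loss upon resolution to `ω`, namely
`(q ω − q⁰ ω) − (C q − C q⁰)`, is at most `C q⁰ + ∑ τ, max 0 (−(q⁰ τ))`. -/
theorem lmsr_cost_dominates_and_bounds_loss
    {Ω : Type*} [Fintype Ω] [Nonempty Ω]
    (b : ℝ) (hb : 0 < b) (q0 q : Ω → ℝ) (ω : Ω) :
    b * Real.log (∑ τ : Ω, Real.exp (q τ / b)) ≥ q ω ∧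
    (q ω - q0 ω)
        - (b * Real.log (∑ τ : Ω, Real.exp (q τ / b))
          - b * Real.log (∑ τ : Ω, Real.exp (q0 τ / b)))
      ≤ b * Real.log (∑ τ : Ω, Real.exp (q0 τ / b)) + ∑ τ : Ω, max 0 (-(q0 τ)) := by
  have key : ∀ p : Ω → ℝ, p ω ≤ b * Real.log (∑ τ : Ω, Real.exp (p τ / b)) := by
    intro p
    have h1 : Real.exp (p ω / b) ≤ ∑ τ : Ω, Real.exp (p τ / b) :=
      Finset.single_le_sum (f := fun τ => Real.exp (p τ / b))
        (fun τ _ => (Real.exp_pos _).le) (Finset.mem_univ ω)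
    have h2 : p ω / b ≤ Real.log (∑ τ : Ω, Real.exp (p τ / b)) :=
      (Real.le_log_iff_exp_le (lt_of_lt_of_le (Real.exp_pos _) h1)).2 h1
    have h3 := (div_le_iff₀ hb).1 h2
    linarith
  have h4 : max 0 (-(q0 ω)) ≤ ∑ τ : Ω, max 0 (-(q0 τ)) :=
    Finset.single_le_sum (f := fun τ => max 0 (-(q0 τ)))
      (fun τ _ => le_max_left _ _) (Finset.mem_univ ω)
  have h5 := le_max_right 0 (-(q0 ω))
  have h6 := key q
  exact ⟨h6, by linarith⟩
end

section
/- The market maker's worst-case loss for a fixed outcome is exactly C(q⁰) − q⁰_ω: for every ω ∈ Ω, the supremum over all share vectors q : Ω → ℝ of q_ω − C(q) equals 0 (it is approached but not attained as q_ω → ∞ with the other coordinates fixed); consequently the supremum over q of the net loss (q_ω − q⁰_ω) − (C(q) − C(q⁰)) equals C(q⁰) − q⁰_ω, which strictly exceeds C(q⁰) whenever q⁰_ω < 0. -/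
theorem lmsr_neg_aux
    {Ω : Type*} [Fintype Ω] (hcard : 1 < Fintype.card Ω)
    (b : ℝ) (hb : 0 < b) (ω : Ω) (q : Ω → ℝ) :
    q ω - b * Real.log (∑ τ : Ω, Real.exp (q τ / b)) < 0 := by
  classical
  obtain ⟨σ, hσ⟩ := Fintype.exists_ne_of_one_lt_card hcard ω
  have h1 : Real.exp (q ω / b) < ∑ τ : Ω, Real.exp (q τ / b) :=
    Finset.single_lt_sum (f := fun τ => Real.exp (q τ / b)) hσ (Finset.mem_univ ω) (Finset.mem_univ σ) (Real.exp_pos _)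
      (fun k _ _ => (Real.exp_pos _).le)
  have h2 : q ω / b < Real.log (∑ τ : Ω, Real.exp (q τ / b)) := by
    rw [Real.lt_log_iff_exp_lt (lt_trans (Real.exp_pos _) h1)]
    exact h1
  rw [div_lt_iff₀ hb] at h2
  linarith

theorem lmsr_approx_aux
    {Ω : Type*} [Fintype Ω]
    (b : ℝ) (hb : 0 < b) (ω : Ω) (ε : ℝ) (hε : 0 < ε) :
    ∃ q : Ω → ℝ, -ε < q ω - b * Real.log (∑ τ : Ω, Real.exp (q τ / b)) := by
  classical
  have hn : (0 : ℝ) < Fintype.card Ω := by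
    exact_mod_cast Fintype.card_pos_iff.mpr ⟨ω⟩
  obtain ⟨δ, hδ, hδε⟩ : ∃ δ : ℝ, 0 < δ ∧ b * (Fintype.card Ω * δ) < ε := by
    refine ⟨ε / (2 * b * Fintype.card Ω), by positivity, ?_⟩
    have : b * (Fintype.card Ω * (ε / (2 * b * Fintype.card Ω))) = ε / 2 := by
      field_simp
    linarith
  refine ⟨fun τ => if τ = ω then 0 else b * Real.log δ, ?_⟩
  set S := ∑ τ : Ω, Real.exp ((if τ = ω then 0 else b * Real.log δ) / b) with hS
  have hS0 : 0 < S := Finset.sum_pos (fun _ _ => Real.exp_pos _) ⟨ω, Finset.mem_univ ω⟩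
  have hS1 : S ≤ 1 + Fintype.card Ω * δ := by
    calc S ≤ ∑ τ : Ω, ((if τ = ω then (1 : ℝ) else 0) + δ) := by
          refine Finset.sum_le_sum fun τ _ => ?_
          by_cases h : τ = ω
          · simp [h, hδ.le]
          · simp only [h, if_false]
            rw [mul_div_cancel_left₀ _ hb.ne', Real.exp_log hδ]
            simp
      _ = 1 + Fintype.card Ω * δ := by
          simp [Finset.sum_add_distrib]
  have hl : Real.log S ≤ Fintype.card Ω * δ := by
    linarith [Real.log_le_sub_one_of_pos hS0]
  have := mul_le_mul_of_nonneg_left hl hb.le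
  simp only [if_true]
  linarith

theorem lmsr_sup_aux
    {Ω : Type*} [Fintype Ω] (hcard : 1 < Fintype.card Ω)
    (b : ℝ) (hb : 0 < b) (ω : Ω) (c : ℝ) :
    (⨆ q : Ω → ℝ, (q ω - b * Real.log (∑ τ : Ω, Real.exp (q τ / b)) + c)) = c := by
  refine ciSup_eq_of_forall_le_of_forall_lt_exists_gt (fun q => ?_) (fun w hw => ?_)
  · linarith [lmsr_neg_aux hcard b hb ω q]
  · obtain ⟨q, hq⟩ := lmsr_approx_aux b hb ω (c - w) (by linarith)
    exact ⟨q, by linarith⟩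


/-- The market maker's worst-case loss for a fixed outcome is exactly
`C(q⁰) − q⁰ ω`, where `C(q) = b·log(∑ τ, exp(q τ / b))` on a finite outcome set
with at least two elements.  For every `ω`:
(i) `⨆ q, (q ω − C q) = 0`, and it is never attained (`q ω − C q < 0` for all `q`);
(ii) for every initial vector `q⁰`, the supremum over `q` of the net loss
`(q ω − q⁰ ω) − (C q − C q⁰)` equals `C q⁰ − q⁰ ω`; and
(iii) `C q⁰ − q⁰ ω` strictly exceeds `C q⁰` whenever `q⁰ ω < 0`. -/
theorem lmsr_worst_case_loss
    {Ω : Type*} [Fintype Ω] (hcard : 1 < Fintype.card Ω)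
    (b : ℝ) (hb : 0 < b) (ω : Ω) :
    (⨆ q : Ω → ℝ, (q ω - b * Real.log (∑ τ : Ω, Real.exp (q τ / b)))) = 0 ∧
    (∀ q : Ω → ℝ, q ω - b * Real.log (∑ τ : Ω, Real.exp (q τ / b)) < 0) ∧
    (∀ q0 : Ω → ℝ,
      (⨆ q : Ω → ℝ,
        ((q ω - q0 ω)
          - (b * Real.log (∑ τ : Ω, Real.exp (q τ / b))
            - b * Real.log (∑ τ : Ω, Real.exp (q0 τ / b)))))
        = b * Real.log (∑ τ : Ω, Real.exp (q0 τ / b)) - q0 ω ∧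
      (q0 ω < 0 →
        b * Real.log (∑ τ : Ω, Real.exp (q0 τ / b))
          < b * Real.log (∑ τ : Ω, Real.exp (q0 τ / b)) - q0 ω)) := by
  refine ⟨?_, lmsr_neg_aux hcard b hb ω, fun q0 => ⟨?_, fun h => by linarith⟩⟩
  · simpa using lmsr_sup_aux hcard b hb ω 0
  · rw [← lmsr_sup_aux hcard b hb ω
      (b * Real.log (∑ τ : Ω, Real.exp (q0 τ / b)) - q0 ω)]
    congr 1
    funext q
    ring
end

section
/- In the golden-ratio-initialized NAND market, all three propositional securities are priced exactly 1/2: let Ω be the set of the 7 truth assignments (a, r, β) ∈ Bool³ satisfying ¬(a ∧ β ∧ r), let φ = (1 + √5)/2, and define q(ω) = b·(log φ)·(number of true coordinates of ω). Then for each of the three securities A = {ω : ω_a = true}, R = {ω : ω_r = true}, B = {ω : ω_β = true}, the LMSR price Σ_{ω∈S} exp(q(ω)/b) / Σ_{ω'∈Ω} exp(q(ω')/b) equals 1/2. -/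
open Finset

/-- The outcome space of the NAND Carroll structure: triples `(a, r, β)` of
Boolean truth values (for `A`, the edge `r`, and `B`) satisfying `¬(a ∧ β ∧ r)`.
There are 7 such assignments. -/
abbrev CarrollNAND : Type :=
  {v : Bool × Bool × Bool // ¬(v.1 = true ∧ v.2.2 = true ∧ v.2.1 = true)}

/-- The golden-ratio-initialized share vector: each outcome `ω` holds
`b·(log φ)·(number of true coordinates of ω)` shares, where `φ = (1 + √5)/2`. -/
noncomputable def goldenShares (b : ℝ) (ω : CarrollNAND) : ℝ :=
  b * Real.log ((1 + Real.sqrt 5) / 2) *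
    ((ω.val.1.toNat + ω.val.2.1.toNat + ω.val.2.2.toNat : ℕ) : ℝ)

/-- The weight of an outcome is the golden ratio to the number of true coordinates. -/
theorem golden_weight (b : ℝ) (hb : 0 < b) (ω : CarrollNAND) :
    Real.exp (goldenShares b ω / b) =
      ((1 + Real.sqrt 5) / 2) ^ (ω.val.1.toNat + ω.val.2.1.toNat + ω.val.2.2.toNat) := by
  have hx : (0 : ℝ) < (1 + Real.sqrt 5) / 2 := by positivity
  have h : goldenShares b ω / b =
      ((ω.val.1.toNat + ω.val.2.1.toNat + ω.val.2.2.toNat : ℕ) : ℝ) *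
        Real.log ((1 + Real.sqrt 5) / 2) := by
    unfold goldenShares
    field_simp
  rw [h, Real.exp_nat_mul, Real.exp_log hx]

/-- Sums over filtered outcomes as sums over all Boolean triples. -/
theorem carroll_sum (p : Bool × Bool × Bool → Prop) [DecidablePred p]
    (f : Bool × Bool × Bool → ℝ) :
    ∑ ω ∈ (univ : Finset CarrollNAND).filter (fun ω => p ω.val), f ω.val =
      ∑ v : Bool × Bool × Bool,
        if ¬(v.1 = true ∧ v.2.2 = true ∧ v.2.1 = true) then (if p v then f v else 0) else 0 := by
  rw [Finset.sum_filter]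
  have h := Finset.sum_subtype (F := (inferInstance : Fintype CarrollNAND))
    ((univ : Finset (Bool × Bool × Bool)).filter
      (fun v => ¬(v.1 = true ∧ v.2.2 = true ∧ v.2.1 = true)))
    (p := fun v => ¬(v.1 = true ∧ v.2.2 = true ∧ v.2.1 = true))
    (fun v => by rw [Finset.mem_filter]; exact and_iff_right (Finset.mem_univ v))
    (fun v => if p v then f v else 0)
  rw [Finset.sum_filter] at h
  exact h.symm

/-- In the golden-ratio-initialized NAND market, all three propositional
securities `A = {ω | ω_a = true}`, `R = {ω | ω_r = true}`, `B = {ω | ω_β = true}`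
have LMSR price exactly `1/2`. -/
theorem golden_ratio_initialization_prices_one_half (b : ℝ) (hb : 0 < b) :
    ((∑ ω ∈ (univ : Finset CarrollNAND).filter (fun ω => ω.val.1 = true),
        Real.exp (goldenShares b ω / b)) /
      (∑ ω : CarrollNAND, Real.exp (goldenShares b ω / b)) = 1 / 2) ∧
    ((∑ ω ∈ (univ : Finset CarrollNAND).filter (fun ω => ω.val.2.1 = true),
        Real.exp (goldenShares b ω / b)) /
      (∑ ω : CarrollNAND, Real.exp (goldenShares b ω / b)) = 1 / 2) ∧
    ((∑ ω ∈ (univ : Finset CarrollNAND).filter (fun ω => ω.val.2.2 = true),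
        Real.exp (goldenShares b ω / b)) /
      (∑ ω : CarrollNAND, Real.exp (goldenShares b ω / b)) = 1 / 2) := by
  have hx : (0 : ℝ) < (1 + Real.sqrt 5) / 2 := by positivity
  have hsq : ((1 + Real.sqrt 5) / 2) ^ 2 = (1 + Real.sqrt 5) / 2 + 1 := by
    have := Real.sq_sqrt (show (0 : ℝ) ≤ 5 by norm_num)
    nlinarith
  simp only [golden_weight b hb]
  generalize (1 + Real.sqrt 5) / 2 = x at hx hsq
  let f : Bool × Bool × Bool → ℝ := fun v => x ^ (v.1.toNat + v.2.1.toNat + v.2.2.toNat)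
  have hT : ∑ ω : CarrollNAND, x ^ (ω.val.1.toNat + ω.val.2.1.toNat + ω.val.2.2.toNat)
      = 1 + 3 * x + 3 * x ^ 2 := by
    have h := carroll_sum (fun _ => True) f
    rw [Finset.filter_true] at h
    refine h.trans ?_
    simp [f, Fintype.sum_prod_type]
    ring
  have hpos : (0 : ℝ) < 1 + 3 * x + 3 * x ^ 2 := by positivity
  rw [hT]
  refine ⟨?_, ?_, ?_⟩ <;> rw [div_eq_iff hpos.ne']
  · refine (carroll_sum (fun v => v.1 = true) f).trans ?_
    simp [f, Fintype.sum_prod_type]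
    linarith
  · refine (carroll_sum (fun v => v.2.1 = true) f).trans ?_
    simp [f, Fintype.sum_prod_type]
    linarith
  · refine (carroll_sum (fun v => v.2.2 = true) f).trans ?_
    simp [f, Fintype.sum_prod_type]
    linarith
end
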